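/- arXiv:1505.01520 — 2 statements merged into one kernel-verified Lean document; each statement's English description precedes it below -/
import Mathlib

section
/- If p > 1, 1/p + 1/q = 1, and f″ ∈ L_p[a,b], then |τ₀(x;α,β)| ≤ (1/(2q+1)^{1/q})·[α^q(x−a)^{q+1} + β^q(b−x)^{q+1}]^{1/q}·‖f″‖_p/(2(α+β)), where ‖f″‖_p = (∫_a^b |f″(t)|^p dt)^{1/p}. -/
open MeasureTheory intervalIntegral

/-- Integral mean of `f` over `[c,d]`. -/
noncomputable def intMean (f : ℝ → ℝ) (c d : ℝ) : ℝ :=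
  (1 / (d - c)) * ∫ t in c..d, f t

/-- The functional τ₀(x; α, β) (the case h = 0). -/
noncomputable def tau0 (a b α β : ℝ) (f f' : ℝ → ℝ) (x : ℝ) : ℝ :=
  (1 / (2 * (α + β))) * (α * (x - a) - β * (b - x)) * f' x - f x
  + (1 / (α + β)) * (α * intMean f a x + β * intMean f x b)

/-!
Two integrations by parts give `2 (α + β) τ₀ = ∫ K f''`, where the Peano kernel `K` is a multiple
of `(t - a)²` to the left of `x` and of `(b - t)²` to the right: each square vanishes to second
order at its end of `[a, b]`, so that only the boundary terms at `x` survive. The bound is then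
Hölder's inequality on the whole of `[a, b]`, and the constant is the `L^q` norm of `K`.
-/

section AbsoluteContinuity

variable {F F' G : ℝ → ℝ} {a b : ℝ}

lemma absolutelyContinuousOnInterval_congr (hF : AbsolutelyContinuousOnInterval F a b)
    (h : Set.EqOn F G (Set.uIcc a b)) : AbsolutelyContinuousOnInterval G a b := by
  refine hF.congr' (Filter.mem_inf_of_right fun E hE ↦ Finset.sum_congr rfl fun i hi ↦ ?_)
  rw [h (hE.1 i hi).1, h (hE.1 i hi).2]

lemma absolutelyContinuousOnInterval_of_eq_add_integral (hF' : IntervalIntegrable F' volume a b)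
    (hF : ∀ t ∈ Set.uIcc a b, F t = F a + ∫ u in a..t, F' u) :
    AbsolutelyContinuousOnInterval F a b := by
  have hconst : AbsolutelyContinuousOnInterval (fun _ ↦ F a) a b :=
    contDiffOn_const.absolutelyContinuousOnInterval
  exact absolutelyContinuousOnInterval_congr
    (hconst.fun_add (hF'.absolutelyContinuousOnInterval_intervalIntegral Set.left_mem_uIcc))
    fun t ht ↦ (hF t ht).symm

lemma ae_hasDerivAt_of_eq_add_integral (hF' : IntervalIntegrable F' volume a b)
    (hF : ∀ t ∈ Set.uIcc a b, F t = F a + ∫ u in a..t, F' u) :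
    ∀ᵐ t, t ∈ Set.uIcc a b → HasDerivAt F (F' t) t := by
  filter_upwards [hF'.ae_hasDerivAt_integral, volume.ae_ne (a ⊓ b), volume.ae_ne (a ⊔ b)]
    with t hderiv hmin hmax ht
  have hnhds : Set.uIcc a b ∈ nhds t :=
    Icc_mem_nhds (lt_of_le_of_ne ht.1 hmin.symm) (lt_of_le_of_ne ht.2 hmax)
  exact ((hderiv ht a Set.left_mem_uIcc).const_add (F a)).congr_of_eventuallyEq
    (Filter.eventually_of_mem hnhds hF)

lemma eq_add_integral_of_hasDerivWithinAt (hF' : IntervalIntegrable F' volume a b)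
    (hF : ∀ t ∈ Set.Icc a b, HasDerivWithinAt F (F' t) (Set.Icc a b) t) :
    ∀ t ∈ Set.Icc a b, F t = F a + ∫ u in a..t, F' u := by
  intro t ht
  have hcont : ContinuousOn F (Set.Icc a t) := fun s hs ↦
    (hF s ⟨hs.1, hs.2.trans ht.2⟩).continuousWithinAt.mono (Set.Icc_subset_Icc_right ht.2)
  have hderiv : ∀ s ∈ Set.Ioo a t, HasDerivAt F (F' s) s := fun s hs ↦
    (hF s ⟨hs.1.le, hs.2.le.trans ht.2⟩).hasDerivAt (Icc_mem_nhds hs.1 (hs.2.trans_le ht.2))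
  have hint : IntervalIntegrable F' volume a t :=
    hF'.mono_set (Set.uIcc_subset_uIcc_left (Set.Icc_subset_uIcc ht))
  rw [integral_eq_sub_of_hasDerivAt_of_le ht.1 hcont hderiv hint, add_sub_cancel]

lemma integral_eq_sub_of_ae_hasDerivAt (hF : AbsolutelyContinuousOnInterval F a b)
    (hF' : ∀ᵐ t, t ∈ Set.uIcc a b → HasDerivAt F (F' t) t) :
    ∫ t in a..b, F' t = F b - F a := by
  rw [← hF.integral_deriv_eq_sub]
  refine intervalIntegral.integral_congr_ae ?_
  filter_upwards [hF'] with t hderiv ht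
  exact (hderiv (Set.uIoc_subset_uIcc ht)).deriv.symm

lemma integral_sub_sq_mul_of_ae_hasDerivAt {f f' f'' : ℝ → ℝ} {c d : ℝ} (e : ℝ)
    (hf : AbsolutelyContinuousOnInterval f c d) (hf' : AbsolutelyContinuousOnInterval f' c d)
    (hderiv : ∀ᵐ t, t ∈ Set.uIcc c d → HasDerivAt f (f' t) t)
    (hderiv' : ∀ᵐ t, t ∈ Set.uIcc c d → HasDerivAt f' (f'' t) t) :
    ∫ t in c..d, (t - e) ^ 2 * f'' t =
      ((d - e) ^ 2 * f' d - 2 * ((d - e) * f d)) - ((c - e) ^ 2 * f' c - 2 * ((c - e) * f c)) +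
        2 * ∫ t in c..d, f t := by
  have hint : IntervalIntegrable f volume c d := hf.continuousOn.intervalIntegrable
  have hlin : AbsolutelyContinuousOnInterval (fun t ↦ t - e) c d :=
    ContDiffOn.absolutelyContinuousOnInterval (by fun_prop)
  have hsq : AbsolutelyContinuousOnInterval (fun t ↦ (t - e) ^ 2) c d :=
    ContDiffOn.absolutelyContinuousOnInterval (by fun_prop)
  have hac : AbsolutelyContinuousOnInterval
      (fun t ↦ (t - e) ^ 2 * f' t - 2 * ((t - e) * f t) + 2 * ∫ u in c..t, f u) c d :=
    ((hsq.fun_mul hf').fun_sub ((hlin.fun_mul hf).const_mul 2)).fun_add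
      ((hint.absolutelyContinuousOnInterval_intervalIntegral Set.left_mem_uIcc).const_mul 2)
  rw [integral_eq_sub_of_ae_hasDerivAt hac, intervalIntegral.integral_same]
  · ring
  filter_upwards [hderiv, hderiv', hint.ae_hasDerivAt_integral] with t hf_t hf'_t hint_t ht
  have hlin_t : HasDerivAt (fun s ↦ s - e) 1 t := (hasDerivAt_id t).sub_const e
  convert! (((hlin_t.fun_pow 2).fun_mul (hf'_t ht)).fun_sub
    ((hlin_t.fun_mul (hf_t ht)).const_mul 2)).fun_add
      ((hint_t ht c Set.left_mem_uIcc).const_mul 2) using 1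
  simp only [Nat.cast_ofNat]
  ring

lemma integral_sub_sq_mul_of_hasDerivWithinAt {f f' f'' : ℝ → ℝ} {c d : ℝ} (hab : a ≤ b)
    (hf : ∀ t ∈ Set.Icc a b, HasDerivWithinAt f (f' t) (Set.Icc a b) t)
    (hf'' : IntervalIntegrable f'' volume a b)
    (hf' : ∀ t ∈ Set.Icc a b, f' t = f' a + ∫ u in a..t, f'' u)
    (hcd : Set.uIcc c d ⊆ Set.uIcc a b) (e : ℝ) :
    ∫ t in c..d, (t - e) ^ 2 * f'' t =
      ((d - e) ^ 2 * f' d - 2 * ((d - e) * f d)) - ((c - e) ^ 2 * f' c - 2 * ((c - e) * f c)) +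
        2 * ∫ t in c..d, f t := by
  rw [← Set.uIcc_of_le hab] at hf'
  have hac' := absolutelyContinuousOnInterval_of_eq_add_integral hf'' hf'
  have hderiv' := ae_hasDerivAt_of_eq_add_integral hf'' hf'
  have hf'int : IntervalIntegrable f' volume a b := hac'.continuousOn.intervalIntegrable
  have hprim := eq_add_integral_of_hasDerivWithinAt hf'int hf
  rw [← Set.uIcc_of_le hab] at hprim
  have hac := absolutelyContinuousOnInterval_of_eq_add_integral hf'int hprim
  have hderiv := ae_hasDerivAt_of_eq_add_integral hf'int hprim
  exact integral_sub_sq_mul_of_ae_hasDerivAt e (hac.mono hcd) (hac'.mono hcd)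
    (hderiv.mono fun _ h ht ↦ h (hcd ht)) (hderiv'.mono fun _ h ht ↦ h (hcd ht))

end AbsoluteContinuity

section Integrals

lemma norm_integral_mul_le_Lp_mul_Lq {X R : Type*} [MeasurableSpace X] {μ : Measure X}
    [NormedRing R] [NormedSpace ℝ R] {p q : ℝ} (hpq : p.HolderConjugate q) {f g : X → R}
    (hf : MemLp f (ENNReal.ofReal p) μ) (hg : MemLp g (ENNReal.ofReal q) μ) :
    ‖∫ t, f t * g t ∂μ‖ ≤ (∫ t, ‖f t‖ ^ p ∂μ) ^ (1 / p) * (∫ t, ‖g t‖ ^ q ∂μ) ^ (1 / q) := by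
  have : (ENNReal.ofReal p).HolderConjugate (ENNReal.ofReal q) := hpq.ennrealOfReal
  have hint : Integrable (fun t ↦ ‖f t‖ * ‖g t‖) μ := hf.norm.integrable_mul hg.norm
  exact (norm_integral_le_of_norm_le hint (.of_forall fun t ↦ norm_mul_le _ _)).trans
    (integral_mul_norm_le_Lp_mul_Lq hpq hf hg)

lemma memLp_of_intervalIntegrable_abs_rpow {g : ℝ → ℝ} {μ : Measure ℝ} {a b p : ℝ} (hab : a ≤ b)
    (hp : 0 < p) (hg : IntervalIntegrable g μ a b)
    (hgp : IntervalIntegrable (fun t ↦ |g t| ^ p) μ a b) :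
    MemLp g (ENNReal.ofReal p) (μ.restrict (Set.Ioc a b)) := by
  rw [intervalIntegrable_iff_integrableOn_Ioc_of_le hab] at hg hgp
  rwa [← integrable_norm_rpow_iff hg.aestronglyMeasurable (by simpa using hp) (by simp),
    ENNReal.toReal_ofReal hp.le]

lemma integral_ite_le {E : Type*} [NormedAddCommGroup E] [NormedSpace ℝ E] {μ : Measure ℝ}
    {u v : ℝ → E} {a x b : ℝ} (hax : a ≤ x) (hxb : x ≤ b)
    (hu : IntervalIntegrable u μ a x) (hv : IntervalIntegrable v μ x b) :
    ∫ t in a..b, (if t ≤ x then u t else v t) ∂μ = ∫ t in a..x, u t ∂μ + ∫ t in x..b, v t ∂μ := by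
  have hleft : Set.EqOn u (fun t ↦ if t ≤ x then u t else v t) (Set.uIoc a x) := fun t ht ↦ by
    rw [Set.uIoc_of_le hax] at ht
    exact (if_pos ht.2).symm
  have hright : Set.EqOn v (fun t ↦ if t ≤ x then u t else v t) (Set.uIoc x b) := fun t ht ↦ by
    rw [Set.uIoc_of_le hxb] at ht
    exact (if_neg ht.1.not_ge).symm
  rw [← integral_add_adjacent_intervals (hu.congr hleft) (hv.congr hright),
    intervalIntegral.integral_congr_ae (.of_forall fun t ht ↦ hleft ht),
    intervalIntegral.integral_congr_ae (.of_forall fun t ht ↦ hright ht)]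

lemma integral_abs_div_mul_sq_rpow (γ : ℝ) {L q : ℝ} (hL : 0 < L) (hq : -1 < 2 * q) :
    ∫ s in 0..L, |γ / L * s ^ 2| ^ q = |γ| ^ q * L ^ (q + 1) / (2 * q + 1) := by
  have hpow : ∀ s ∈ Set.uIcc 0 L, |γ / L * s ^ 2| ^ q = (|γ| / L) ^ q * s ^ (2 * q) := by
    intro s hs
    rw [Set.uIcc_of_le hL.le] at hs
    rw [abs_mul, abs_div, abs_of_pos hL, abs_of_nonneg (sq_nonneg s),
      Real.mul_rpow (by positivity) (by positivity), Real.rpow_mul hs.1, Real.rpow_two]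
  rw [intervalIntegral.integral_congr hpow, intervalIntegral.integral_const_mul,
    integral_rpow (.inl hq), Real.zero_rpow (by linarith), sub_zero,
    Real.div_rpow (abs_nonneg γ) hL.le, show 2 * q + 1 = q + (q + 1) by ring, Real.rpow_add hL]
  field_simp

end Integrals

/-- The Peano kernel `K` of the functional `τ₀`, normalised so that `2 (α + β) τ₀ = ∫ K f''`. -/
noncomputable def peanoKernel (a b α β x t : ℝ) : ℝ :=
  if t ≤ x then α / (x - a) * (t - a) ^ 2 else β / (b - x) * (b - t) ^ 2

section PeanoKernel

variable {a b x : ℝ} (α β : ℝ)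

lemma measurable_peanoKernel (a b x : ℝ) : Measurable (peanoKernel a b α β x) :=
  Measurable.ite measurableSet_Iic (by fun_prop) (by fun_prop)

lemma abs_peanoKernel_le (hax : a < x) (hxb : x < b) {t : ℝ} (ht : t ∈ Set.Icc a b) :
    |peanoKernel a b α β x t| ≤ max (|α| * (x - a)) (|β| * (b - x)) := by
  have habs_le : ∀ γ L s : ℝ, 0 < L → 0 ≤ s → s ≤ L → |γ / L * s ^ 2| ≤ |γ| * L := by
    intro γ L s hL hs hsL
    calc |γ / L * s ^ 2| = |γ| / L * s ^ 2 := by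
          rw [abs_mul, abs_div, abs_of_pos hL, abs_of_nonneg (sq_nonneg s)]
      _ ≤ |γ| / L * L ^ 2 := by gcongr
      _ = |γ| * L := by field_simp
  unfold peanoKernel
  split_ifs with htx
  · exact (habs_le α _ _ (sub_pos.2 hax) (sub_nonneg.2 ht.1) (by linarith)).trans (le_max_left _ _)
  · exact (habs_le β _ _ (sub_pos.2 hxb) (sub_nonneg.2 ht.2) (by linarith)).trans
      (le_max_right _ _)

lemma memLp_peanoKernel (hax : a < x) (hxb : x < b) (r : ENNReal) :
    MemLp (peanoKernel a b α β x) r (volume.restrict (Set.Ioc a b)) :=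
  .of_bound (measurable_peanoKernel α β a b x).aestronglyMeasurable _ <|
    (ae_restrict_mem measurableSet_Ioc).mono fun _ ht ↦
      abs_peanoKernel_le α β hax hxb (Set.Ioc_subset_Icc_self ht)

lemma integral_abs_peanoKernel_rpow (hax : a < x) (hxb : x < b) {q : ℝ} (hq : 0 ≤ q) :
    ∫ t in a..b, |peanoKernel a b α β x t| ^ q =
      (|α| ^ q * (x - a) ^ (q + 1) + |β| ^ q * (b - x) ^ (q + 1)) / (2 * q + 1) := by
  simp only [peanoKernel, apply_ite fun s : ℝ ↦ |s| ^ q]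
  rw [integral_ite_le hax.le hxb.le
      (Continuous.intervalIntegrable (by fun_prop (disch := simp [hq])) _ _)
      (Continuous.intervalIntegrable (by fun_prop (disch := simp [hq])) _ _),
    intervalIntegral.integral_comp_sub_right (fun s ↦ |α / (x - a) * s ^ 2| ^ q) a,
    intervalIntegral.integral_comp_sub_left (fun s ↦ |β / (b - x) * s ^ 2| ^ q) b,
    sub_self, sub_self, integral_abs_div_mul_sq_rpow α (sub_pos.2 hax) (by linarith),
    integral_abs_div_mul_sq_rpow β (sub_pos.2 hxb) (by linarith), add_div]

lemma integral_peanoKernel_mul {g : ℝ → ℝ} (hax : a < x) (hxb : x < b)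
    (hg : IntervalIntegrable g volume a b) :
    ∫ t in a..b, peanoKernel a b α β x t * g t =
      α / (x - a) * (∫ t in a..x, (t - a) ^ 2 * g t) +
        β / (b - x) * ∫ t in x..b, (t - b) ^ 2 * g t := by
  have hx : x ∈ Set.uIcc a b := Set.Icc_subset_uIcc ⟨hax.le, hxb.le⟩
  have hleft : IntervalIntegrable g volume a x := hg.mono_set (Set.uIcc_subset_uIcc_left hx)
  have hright : IntervalIntegrable g volume x b := hg.mono_set (Set.uIcc_subset_uIcc_right hx)
  simp only [peanoKernel, ite_mul, sub_sq_comm b]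
  rw [integral_ite_le hax.le hxb.le (hleft.continuousOn_mul (by fun_prop))
    (hright.continuousOn_mul (by fun_prop))]
  simp only [mul_assoc, intervalIntegral.integral_const_mul]

variable {α β} in
theorem tau0_eq_integral_peanoKernel {f f' f'' : ℝ → ℝ} (hαβ : α + β ≠ 0)
    (hax : a < x) (hxb : x < b)
    (hf : ∀ t ∈ Set.Icc a b, HasDerivWithinAt f (f' t) (Set.Icc a b) t)
    (hf'' : IntervalIntegrable f'' volume a b)
    (hf' : ∀ t ∈ Set.Icc a b, f' t = f' a + ∫ u in a..t, f'' u) :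
    tau0 a b α β f f' x = (∫ t in a..b, peanoKernel a b α β x t * f'' t) / (2 * (α + β)) := by
  have hab : a ≤ b := (hax.trans hxb).le
  have hx : x ∈ Set.uIcc a b := Set.Icc_subset_uIcc ⟨hax.le, hxb.le⟩
  have hxa : x - a ≠ 0 := (sub_pos.2 hax).ne'
  have hbx : b - x ≠ 0 := (sub_pos.2 hxb).ne'
  rw [integral_peanoKernel_mul α β hax hxb hf'',
    integral_sub_sq_mul_of_hasDerivWithinAt hab hf hf'' hf' (Set.uIcc_subset_uIcc_left hx),
    integral_sub_sq_mul_of_hasDerivWithinAt hab hf hf'' hf' (Set.uIcc_subset_uIcc_right hx)]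
  unfold tau0 intMean
  field_simp
  ring

end PeanoKernel

theorem stmt_5_general {a b α β x p q : ℝ} {f f' f'' : ℝ → ℝ}
    (hαβ : α + β ≠ 0) (hax : a < x) (hxb : x < b)
    (hf : ∀ t ∈ Set.Icc a b, HasDerivWithinAt f (f' t) (Set.Icc a b) t)
    (hf'' : IntervalIntegrable f'' volume a b)
    (hf' : ∀ t ∈ Set.Icc a b, f' t = f' a + ∫ u in a..t, f'' u)
    (hpq : p.HolderConjugate q) (hLp : IntervalIntegrable (fun t ↦ |f'' t| ^ p) volume a b) :
    |tau0 a b α β f f' x| ≤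
      (1 / (2 * q + 1) ^ (1 / q)) *
        (|α| ^ q * (x - a) ^ (q + 1) + |β| ^ q * (b - x) ^ (q + 1)) ^ (1 / q) *
        (∫ t in a..b, |f'' t| ^ p) ^ (1 / p) / (2 * |α + β|) := by
  have hab : a ≤ b := (hax.trans hxb).le
  have hxa : 0 < x - a := sub_pos.2 hax
  have hbx : 0 < b - x := sub_pos.2 hxb
  have hq : 0 < q := hpq.symm.pos
  have holder : |∫ t in a..b, peanoKernel a b α β x t * f'' t| ≤
      (∫ t in a..b, |peanoKernel a b α β x t| ^ q) ^ (1 / q) *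
        (∫ t in a..b, |f'' t| ^ p) ^ (1 / p) := by
    simpa only [integral_of_le hab, Real.norm_eq_abs] using norm_integral_mul_le_Lp_mul_Lq hpq.symm
      (memLp_peanoKernel α β hax hxb _)
      (memLp_of_intervalIntegrable_abs_rpow hab hpq.pos hf'' hLp)
  rw [integral_abs_peanoKernel_rpow α β hax hxb hq.le,
    Real.div_rpow (by positivity) (by positivity), div_eq_mul_one_div, mul_comm (_ ^ _)] at holder
  rw [tau0_eq_integral_peanoKernel hαβ hax hxb hf hf'' hf', abs_div, abs_mul, abs_two]
  gcongr

theorem stmt_5 (a b α β x p q : ℝ) (f f' f'' : ℝ → ℝ)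
    (hab : a < b)
    (hα : 0 ≤ α) (hβ : 0 ≤ β) (hαβ : 0 < α + β)
    (hax : a < x) (hxb : x < b)
    (hfd : ∀ t ∈ Set.Icc a b, HasDerivAt f (f' t) t)
    (hf''int : IntervalIntegrable f'' MeasureTheory.volume a b)
    (hac : ∀ t ∈ Set.Icc a b, f' t = f' a + ∫ u in a..t, f'' u)
    (hp : 1 < p) (hpq : 1 / p + 1 / q = 1)
    (hLp : IntervalIntegrable (fun t => |f'' t| ^ p) MeasureTheory.volume a b)
    :
    |tau0 a b α β f f' x| ≤
      (1 / (2 * q + 1) ^ (1 / q)) *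
        (α ^ q * (x - a) ^ (q + 1) + β ^ q * (b - x) ^ (q + 1)) ^ (1 / q) *
        (∫ t in a..b, |f'' t| ^ p) ^ (1 / p) / (2 * (α + β)) := by
  have hconj : p.HolderConjugate q := Real.holderConjugate_iff.2 ⟨hp, by simpa using hpq⟩
  simpa only [abs_of_nonneg hα, abs_of_nonneg hβ, abs_of_pos hαβ] using stmt_5_general hαβ.ne' hax
    hxb (fun t ht ↦ (hfd t ht).hasDerivWithinAt) hf''int hac hconj hLp
end

section
/- Taking h = 1: if f″ is essentially bounded on [a,b], then for every x with a < x < b, the quantity τ(x;α,β) formed with h = 1 satisfies |τ(x;α,β)| ≤ (‖f″‖_∞/(6(α+β)))·[ (α/(x−a))·{(x−(a+b)/2)³ + ((b−a)/2)³} + (β/(b−x))·{((a+b)/2−x)³ + ((b−a)/2)³} ], where ‖f″‖_∞ denotes the essential supremum of |f″| on [a,b]. -/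
open MeasureTheory intervalIntegral

/-!
Put `m = (a + b) / 2` and integrate `∫ (t - m) ^ 2 / 2 * f'' t` by parts twice over `[a, x]` and
over `[x, b]`. Each integral of `f` then equals its boundary terms up to an error of at most
`K * ∫ (t - m) ^ 2 / 2`, and `τ(x; α, β)` is the combination of the two errors with weights
`α / ((x - a) (α + β))` and `β / ((b - x) (α + β))`.
-/

open Set Topology

theorem absolutelyContinuousOnInterval_congr_s10 {X : Type*} [PseudoMetricSpace X] {g h : ℝ → X}
    {a b : ℝ} (hg : AbsolutelyContinuousOnInterval g a b) (hgh : EqOn g h (uIcc a b)) :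
    AbsolutelyContinuousOnInterval h a b := by
  rw [absolutelyContinuousOnInterval_iff] at hg ⊢
  intro ε hε
  obtain ⟨δ, hδ, hsum⟩ := hg ε hε
  refine ⟨δ, hδ, fun E hE hlen ↦ ?_⟩
  convert hsum E hE hlen using 1
  refine Finset.sum_congr rfl fun i hi ↦ ?_
  rw [hgh (hE.1 i hi).1, hgh (hE.1 i hi).2]

theorem absolutelyContinuousOnInterval_of_eq_add_integral_s10 {g φ : ℝ → ℝ} {a b : ℝ}
    (hφ : IntervalIntegrable φ volume a b)
    (hg : ∀ t ∈ uIcc a b, g t = g a + ∫ u in a..t, φ u) :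
    AbsolutelyContinuousOnInterval g a b := by
  have hconst : AbsolutelyContinuousOnInterval (fun _ ↦ g a) a b :=
    (LipschitzWith.const (g a)).lipschitzOnWith.absolutelyContinuousOnInterval
  exact absolutelyContinuousOnInterval_congr_s10
    (hconst.add (hφ.absolutelyContinuousOnInterval_intervalIntegral left_mem_uIcc))
    fun t ht ↦ (hg t ht).symm

theorem ae_hasDerivAt_of_eq_add_integral_s10 {E : Type*} [NormedAddCommGroup E] [NormedSpace ℝ E]
    [CompleteSpace E] {g φ : ℝ → E} {a b : ℝ} (hφ : IntervalIntegrable φ volume a b)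
    (hg : ∀ t ∈ uIcc a b, g t = g a + ∫ u in a..t, φ u) :
    ∀ᵐ t, t ∈ uIcc a b → HasDerivAt g (φ t) t := by
  filter_upwards [hφ.ae_hasDerivAt_integral, Measure.ae_ne volume a, Measure.ae_ne volume b]
    with t hderiv hta htb ht
  have hnhds : uIcc a b ∈ 𝓝 t := Icc_mem_nhds (by grind [mem_uIcc]) (by grind [mem_uIcc])
  exact ((hderiv ht a left_mem_uIcc).const_add (g a)).congr_of_eventuallyEq
    (Filter.mem_of_superset hnhds hg)

/-- The approximation of `∫ s in m..t, f s` by the values of `f` and its derivative `f'` at the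
upper endpoint: if `F` is a primitive of `f`, this is `F t` minus the second-order Taylor polynomial
of `F` about `t`, evaluated at `m`. -/
noncomputable def taylorIntegral (f f' : ℝ → ℝ) (m t : ℝ) : ℝ :=
  (t - m) * f t - (t - m) ^ 2 / 2 * f' t

section Remainder

variable {f f' : ℝ → ℝ} {a b c d m x K : ℝ}

theorem integral_sub_taylorIntegral_eq
    (hf : ∀ t ∈ uIcc c d, HasDerivWithinAt f (f' t) (uIcc c d) t)
    (hf' : AbsolutelyContinuousOnInterval f' c d) :
    (∫ t in c..d, f t) - (taylorIntegral f f' m d - taylorIntegral f f' m c) =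
      ∫ t in c..d, (t - m) ^ 2 / 2 * deriv f' t := by
  have hkernel (t : ℝ) : HasDerivAt (fun s : ℝ ↦ (s - m) ^ 2 / 2) (t - m) t := by
    simpa using (((hasDerivAt_id t).sub_const m).pow 2).div_const 2
  have hkernel_ac : AbsolutelyContinuousOnInterval (fun t ↦ (t - m) ^ 2 / 2) c d :=
    ContDiffOn.absolutelyContinuousOnInterval (by fun_prop)
  have parts_f' : ∫ t in c..d, (t - m) ^ 2 / 2 * deriv f' t =
      (d - m) ^ 2 / 2 * f' d - (c - m) ^ 2 / 2 * f' c - ∫ t in c..d, (t - m) * f' t := by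
    simpa only [(hkernel _).deriv] using hkernel_ac.integral_mul_deriv_eq_deriv_mul hf'
  have parts_f : ∫ t in c..d, (t - m) * f' t =
      (d - m) * f d - (c - m) * f c - ∫ t in c..d, f t := by
    simpa only [id_eq, one_mul] using integral_mul_deriv_eq_deriv_mul_of_hasDerivWithinAt
      (fun t _ ↦ ((hasDerivAt_id t).sub_const m).hasDerivWithinAt) hf
      intervalIntegrable_const hf'.continuousOn.intervalIntegrable
  rw [parts_f', parts_f, taylorIntegral, taylorIntegral]
  ring

theorem abs_integral_sub_taylorIntegral_le (hcd : c ≤ d)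
    (hf : ∀ t ∈ Icc c d, HasDerivWithinAt f (f' t) (Icc c d) t)
    (hf' : AbsolutelyContinuousOnInterval f' c d)
    (hK : ∀ᵐ t, t ∈ Icc c d → |deriv f' t| ≤ K) :
    |(∫ t in c..d, f t) - (taylorIntegral f f' m d - taylorIntegral f f' m c)| ≤
      K / 6 * ((d - m) ^ 3 - (c - m) ^ 3) := by
  rw [← uIcc_of_le hcd] at hf
  rw [integral_sub_taylorIntegral_eq hf hf']
  have hbound : ∀ᵐ t, t ∈ Ioc c d → ‖(t - m) ^ 2 / 2 * deriv f' t‖ ≤ K / 2 * (t - m) ^ 2 := by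
    filter_upwards [hK] with t ht htcd
    calc ‖(t - m) ^ 2 / 2 * deriv f' t‖ = (t - m) ^ 2 / 2 * |deriv f' t| := by
          rw [norm_mul, Real.norm_of_nonneg (by positivity), Real.norm_eq_abs]
      _ ≤ (t - m) ^ 2 / 2 * K := by gcongr; exact ht (Ioc_subset_Icc_self htcd)
      _ = K / 2 * (t - m) ^ 2 := by ring
  calc |∫ t in c..d, (t - m) ^ 2 / 2 * deriv f' t|
      ≤ ∫ t in c..d, K / 2 * (t - m) ^ 2 :=
        norm_integral_le_of_norm_le hcd hbound
          (Continuous.intervalIntegrable (by fun_prop) c d)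
    _ = K / 6 * ((d - m) ^ 3 - (c - m) ^ 3) := by
        rw [intervalIntegral.integral_const_mul, integral_comp_sub_right (fun t ↦ t ^ 2),
          integral_pow]
        push_cast
        ring

theorem abs_weighted_integral_sub_taylorIntegral_le {u v : ℝ} (hu : 0 ≤ u) (hv : 0 ≤ v)
    (hax : a ≤ x) (hxb : x ≤ b)
    (hf : ∀ t ∈ Icc a b, HasDerivWithinAt f (f' t) (Icc a b) t)
    (hf' : AbsolutelyContinuousOnInterval f' a b)
    (hK : ∀ᵐ t, t ∈ Icc a b → |deriv f' t| ≤ K) :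
    |u * ((∫ t in a..x, f t) - (taylorIntegral f f' m x - taylorIntegral f f' m a)) +
        v * ((∫ t in x..b, f t) - (taylorIntegral f f' m b - taylorIntegral f f' m x))| ≤
      K / 6 * (u * ((x - m) ^ 3 - (a - m) ^ 3) + v * ((b - m) ^ 3 - (x - m) ^ 3)) := by
  have panel {c d : ℝ} (hac : a ≤ c) (hcd : c ≤ d) (hdb : d ≤ b) :
      |(∫ t in c..d, f t) - (taylorIntegral f f' m d - taylorIntegral f f' m c)| ≤
        K / 6 * ((d - m) ^ 3 - (c - m) ^ 3) := by
    have hsub : Icc c d ⊆ Icc a b := Icc_subset_Icc hac hdb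
    refine abs_integral_sub_taylorIntegral_le hcd (fun t ht ↦ (hf t (hsub ht)).mono hsub)
      (hf'.mono ?_) (hK.mono fun t ht htcd ↦ ht (hsub htcd))
    rwa [uIcc_of_le hcd, uIcc_of_le (hac.trans (hcd.trans hdb))]
  calc _ ≤ u * |(∫ t in a..x, f t) - (taylorIntegral f f' m x - taylorIntegral f f' m a)| +
        v * |(∫ t in x..b, f t) - (taylorIntegral f f' m b - taylorIntegral f f' m x)| := by
        grw [abs_add_le, abs_mul, abs_mul, abs_of_nonneg hu, abs_of_nonneg hv]
    _ ≤ u * (K / 6 * ((x - m) ^ 3 - (a - m) ^ 3)) + v * (K / 6 * ((b - m) ^ 3 - (x - m) ^ 3)) := by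
        gcongr
        exacts [panel le_rfl hax hxb, panel hax hxb le_rfl]
    _ = _ := by ring

end Remainder

theorem stmt_10 (a b α β : ℝ) (f f' f'' : ℝ → ℝ)
    (hab : a < b)
    (hα : 0 ≤ α) (hβ : 0 ≤ β) (hαβ : 0 < α + β)
    (hfd : ∀ t ∈ Set.Icc a b, HasDerivAt f (f' t) t)
    (hf''int : IntervalIntegrable f'' MeasureTheory.volume a b)
    (hac : ∀ t ∈ Set.Icc a b, f' t = f' a + ∫ u in a..t, f'' u)
    (K : ℝ) (hK : ∀ᵐ t ∂MeasureTheory.volume.restrict (Set.Icc a b), |f'' t| ≤ K)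
    :
    ∀ x : ℝ, a < x → x < b →
      |(1 / (2 * (α + β))) * ((α / (x - a)) * (x - (a + b) / 2) ^ 2
            - (β / (b - x)) * (x - (a + b) / 2) ^ 2) * f' x
        - (1 / (α + β)) * ((α / (x - a)) * (x - (a + b) / 2)
            - (β / (b - x)) * (x - (a + b) / 2)) * f x
        - ((b - a) / (2 * (α + β))) * ((α / (x - a)) * f a + (β / (b - x)) * f b)
        + ((b - a) ^ 2 / (8 * (α + β))) * ((β / (b - x)) * f' b - (α / (x - a)) * f' a)
        + (1 / (α + β)) * (α * intMean f a x + β * intMean f x b)| ≤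
      (K / (6 * (α + β))) *
        ((α / (x - a)) * ((x - (a + b) / 2) ^ 3 + ((b - a) / 2) ^ 3)
          + (β / (b - x)) * (((a + b) / 2 - x) ^ 3 + ((b - a) / 2) ^ 3)) := by
  intro x hax hxb
  rw [← uIcc_of_le hab.le] at hac
  have hf'_ac : AbsolutelyContinuousOnInterval f' a b :=
    absolutelyContinuousOnInterval_of_eq_add_integral_s10 hf''int hac
  have hf'_deriv : ∀ᵐ t, t ∈ Icc a b → |deriv f' t| ≤ K := by
    filter_upwards [ae_hasDerivAt_of_eq_add_integral_s10 hf''int hac,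
      (ae_restrict_iff' measurableSet_Icc).1 hK] with t hderiv hbound ht
    rw [(hderiv (Icc_subset_uIcc ht)).deriv]
    exact hbound ht
  have hxa : 0 < x - a := sub_pos.2 hax
  have hbx : 0 < b - x := sub_pos.2 hxb
  have key := abs_weighted_integral_sub_taylorIntegral_le (m := (a + b) / 2)
    (u := α / (x - a) / (α + β)) (v := β / (b - x) / (α + β)) (by positivity) (by positivity)
    hax.le hxb.le (fun t ht ↦ (hfd t ht).hasDerivWithinAt) hf'_ac hf'_deriv
  convert key using 1
  · congr 1
    simp only [intMean, taylorIntegral]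
    field_simp
    ring
  · field_simp
    ring
end
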